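/- (Consistency-around-a-face-centered-cube for the pair (A3_{(0)}, C3_{(0;0;0)}).) There exists a nonzero polynomial p in twelve variables with complex coefficients such that: for all nonzero α1,α2,β1,β2,γ1,γ2 ∈ ℂ and all x, xa, xb, xc, zn, zw ∈ ℂ with p(α1,α2,β1,β2,γ1,γ2,x,xa,xb,xc,zn,zw) ≠ 0, there exist xd, y, ya, yb, yc, yd, ze, zs ∈ ℂ satisfying all fourteen equations of the CAFCC system for the pair (A, C) := (A3_{(0)}, C3_{(0;0;0)}) with parameters (α1,α2),(β1,β2),(γ1,γ2). In other words, the overdetermined system of fourteen face-centered quad equations on the face-centered cube is consistent: generic initial data x, xa, xb, xc, zn, zw admits a completion solving all fourteen equations. -/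

import Mathlib

noncomputable section

open Matrix Complex

/-- The type-A face-centered quad polynomial `A3_{(δ)}`. -/
noncomputable def A3 (d x xa xb xc xd a1 a2 b1 b2 : ℂ) : ℂ :=
  d/4*(a1/a2-a2/a1)*(b1/b2-b2/b1)*(b1*b2/(a1*a2)-a1*a2/(b1*b2))*x
  + ((b1/b2-b2/b1)*(xa*xb-xc*xd) + (a1/a2-a2/a1)*(xa*xc-xb*xd)
      - (a1*a2/(b1*b2)-b1*b2/(a1*a2))*(xa*xd-xb*xc))*x
  + (a2/b1-b1/a2)*(xa*x^2-xb*xc*xd) - (a2/b2-b2/a2)*(xb*x^2-xa*xc*xd)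
  - (a1/b1-b1/a1)*(xc*x^2-xa*xb*xd) + (a1/b2-b2/a1)*(xd*x^2-xa*xb*xc)
  + d/4*((a1/b1-b1/a1)*(a2/b2-b2/a2)*((a1/b2-b2/a1)*xa+(a2/b1-b1/a2)*xd)
      - (a1/b2-b2/a1)*(a2/b1-b1/a2)*((a1/b1-b1/a1)*xb+(a2/b2-b2/a2)*xc))

/-- The type-C face-centered quad polynomial `C3_{(δ1;δ2;δ3)}`. -/
noncomputable def C3 (d1 d2 d3 x xa xb xc xd a1 a2 b1 b2 : ℂ) : ℂ :=
  (a2*(b1*xd-b2*xc) - d3*(a2^2*(b1*xb-b2*xa)+b1*b2*(b1*xa-b2*xb))/a1)*x^2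
  + a2*xa*xb*(b2*xd-b1*xc)
  + d1*a1*(b1*xb-b2*xa+a2^2*(xa/b2-xb/b1))
  + (a2^2*(xb*xc-xa*xd) + b1*b2*(xa*xc-xb*xd)
      + a2*(b2/b1-b1/b2)*(d1*a1 - d3*(b1*b2/a1)*xa*xb + d2*(b1*b2/a1)*xc*xd))*x
  + d2*((a2^2-b1^2)*(a2^2-b2^2)/(2*a2*b1*b2)*(b2*xd-b1*xc)
      + (xc*xd/a1)*(b1*b2*(b1*xb-b2*xa)+a2^2*(b1*xa-b2*xb)))

/-- The permutation matrix `P`. -/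
noncomputable def Pm : Matrix (Fin 2) (Fin 2) ℂ := !![0, 1; 1, 0]

/-- The matrix `M(u,v)` from the type-A Lax matrix of `A3_{(0)}`. -/
noncomputable def Mm (p1 p2 q1 q2 u v : ℂ) : Matrix (Fin 2) (Fin 2) ℂ :=
  (4:ℂ) • !![q1/p1-p1/q1, (p2/q1-q1/p2)*u+(q2/p2-p2/q2)*v; 0, q2/p1-p1/q2]

/-- The unnormalized type-A Lax matrix of `A3_{(0)}`. -/
noncomputable def NA3 (x xa xb p1 p2 q1 q2 : ℂ) : Matrix (Fin 2) (Fin 2) ℂ :=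
  x^2 • Mm p1 p2 q1 q2 xa xb
  + x • ((4:ℂ) • !![(p1/p2-p2/p1)*xa+(p1*p2/(q1*q2)-q1*q2/(p1*p2))*xb, (q1/q2-q2/q1)*xa*xb;
        q1/q2-q2/q1, (p1*p2/(q1*q2)-q1*q2/(p1*p2))*xa+(p1/p2-p2/p1)*xb])
  + (xa*xb) • (Pm * Mm p1 p2 q1 q2 (1/xa) (1/xb) * Pm)

/-- The normalization factor `D_LA` for the type-A Lax matrix of `A3_{(0)}`. -/
noncomputable def DA3 (x xa xb p1 p2 q1 q2 : ℂ) : ℂ :=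
  4*Complex.I*(p1^2-q1^2)*(q1*xa-p2*x)*(q2*x-p2*xb)/(p1*p2*q1*q2)

/-- The (normalized) type-A Lax matrix of `A3_{(0)}`. -/
noncomputable def laxA3 (x xa xb p1 p2 q1 q2 : ℂ) : Matrix (Fin 2) (Fin 2) ℂ :=
  (DA3 x xa xb p1 p2 q1 q2)⁻¹ • NA3 x xa xb p1 p2 q1 q2

/-- The type-C Lax matrix of `C3_{(δ1;δ2;δ3)}`. -/
noncomputable def laxC3 (d1 d2 d3 x xb xd p1 p2 q1 q2 : ℂ) : Matrix (Fin 2) (Fin 2) ℂ :=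
  p2 • (x^2 • (!![-q2, q1*xd; 0, 0]
        + d1 • ((2*d3*q1*q2/p1) • !![0, (q2/p2-p2/q2)*xb; 0, q1/p2-p2/q1]))
    + x • (!![p2*xb, -((q1*q2/p2)*xb*xd); -(q1*q2/p2), p2*xd]
        + d1 • (((2*q1*q2/p1)*(q2/q1-q1/q2)) • !![d2*xd, p1^2/(2*q1*q2); 0, d3*xb]))
    + (!![0, 0; q1*xb, -(q2*xb*xd)]
        + d1 • !![d2*q1*(q1/p2-p2/q1)*(p2/q2-q2/p2+2*(q2/p1)*xb*xd),
                   (q1/p2-p2/q1)*(p1*xb-d2*(p2/q2-q2/p2)*q2*xd);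
                   2*d2*(q2/p2-p2/q2)*(q1*q2/p1)*xd, p1*(q2/p2-p2/q2)]))

/-!
The quad equation `e (q u - p v) = w (p u - q v)` (lattice modified KdV, with `p` and `q` the
parameters of the edges `e u` and `e v`) is consistent around the cube: given three faces at a
corner, a face at the far vertex is equivalent to a relation on a tetrahedron of vertices which is
symmetric in the three directions. Both face-centered equations follow
from it: `A3_{(0)}` from the four squares around a vertex, `C3_{(0;0;0)}` from two squares with a
common edge. So it suffices to extend the fourteen unknowns to solutions on two four-dimensional
cubes with directions `a2, g1, g2, b1` and `a2, g1, g2, b2`, glued along a three-dimensional one.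

Genericity is checked at a single point. If `u, v = ±1` then the quad equation with
`p ^ 2 ≠ q ^ 2` has the solution `w = -e u v`, whatever the parameters. Hence if the initial data
are signs, then every vertex of the lattice is a sign, so no denominator vanishes.
-/

open Filter MvPolynomial

section MKdV

variable {K : Type*} [Field K]

/-- A nondegenerate solution of the lattice modified KdV equation on a square with vertices
`e, u, v, w`, where the edges `e u` and `v w` carry the parameter `p`, the edges `e v` and `u w`
carry `q`. -/
structure IsMKdVQuad (p q e u v w : K) : Prop where
  sq_ne_sq : p ^ 2 ≠ q ^ 2
  center_ne_zero : e ≠ 0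
  left_ne_zero : u ≠ 0
  right_ne_zero : v ≠ 0
  opposite_ne_zero : w ≠ 0
  eq : e * (q * u - p * v) = w * (p * u - q * v)

variable {p q r e u v w uv uw vw z : K}

/-- The relation which consistency around a cube with directions `p, q, r` imposes on the vertex
`z` opposite to the corner and the three neighbours `u, v, w` of the corner. -/
def TetrahedronEq (p q r u v w z : K) : Prop :=
  z * (p * (q ^ 2 - r ^ 2) * u + q * (r ^ 2 - p ^ 2) * v + r * (p ^ 2 - q ^ 2) * w) =
    -(p * (q ^ 2 - r ^ 2) * (v * w) + q * (r ^ 2 - p ^ 2) * (u * w)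
      + r * (p ^ 2 - q ^ 2) * (u * v))

theorem TetrahedronEq.swap (h : TetrahedronEq p q r u v w z) : TetrahedronEq q p r v u w z := by
  unfold TetrahedronEq at *
  linear_combination -h

theorem TetrahedronEq.rotate (h : TetrahedronEq p q r u v w z) :
    TetrahedronEq q r p v w u z := by
  unfold TetrahedronEq at *
  linear_combination h

namespace IsMKdVQuad

theorem swap (h : IsMKdVQuad p q e u v w) : IsMKdVQuad q p e v u w where
  sq_ne_sq := h.sq_ne_sq.symm
  center_ne_zero := h.center_ne_zero
  left_ne_zero := h.right_ne_zero
  right_ne_zero := h.left_ne_zero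
  opposite_ne_zero := h.opposite_ne_zero
  eq := by linear_combination -h.eq

theorem reflect (h : IsMKdVQuad p q e u v w) : IsMKdVQuad p q u e w v where
  sq_ne_sq := h.sq_ne_sq
  center_ne_zero := h.left_ne_zero
  left_ne_zero := h.center_ne_zero
  right_ne_zero := h.opposite_ne_zero
  opposite_ne_zero := h.right_ne_zero
  eq := by linear_combination h.eq

theorem rotate (h : IsMKdVQuad p q e u v w) : IsMKdVQuad q p u w e v :=
  h.reflect.swap

theorem opposite (h : IsMKdVQuad p q e u v w) : IsMKdVQuad p q w v u e :=
  h.rotate.rotate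

theorem denom_ne_zero (h : IsMKdVQuad p q e u v w) : p * u - q * v ≠ 0 := by
  intro hden
  have hnum : q * u - p * v = 0 := by simpa [hden, h.center_ne_zero] using h.eq
  have hu : (p ^ 2 - q ^ 2) * u = 0 := by linear_combination p * hden - q * hnum
  exact mul_ne_zero (sub_ne_zero.mpr h.sq_ne_sq) h.left_ne_zero hu

theorem face_eq_iff_tetrahedronEq (huv : IsMKdVQuad p q e u v uv)
    (hvw : IsMKdVQuad q r e v w vw) :
    v * (r * uv - p * vw) = z * (p * uv - r * vw) ↔ TetrahedronEq p q r u v w z := by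
  set d := (p * u - q * v) * (q * v - r * w) with hd
  have num_eq : (r * uv - p * vw) * d =
      -e * (p * (q ^ 2 - r ^ 2) * (v * w) + q * (r ^ 2 - p ^ 2) * (u * w)
        + r * (p ^ 2 - q ^ 2) * (u * v)) := by
    rw [hd]
    linear_combination p * (p * u - q * v) * hvw.eq - r * (q * v - r * w) * huv.eq
  have den_eq : (p * uv - r * vw) * d =
      e * v * (p * (q ^ 2 - r ^ 2) * u + q * (r ^ 2 - p ^ 2) * v + r * (p ^ 2 - q ^ 2) * w) := by
    rw [hd]
    linear_combination r * (p * u - q * v) * hvw.eq - p * (q * v - r * w) * huv.eq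
  have d_ne_zero : d ≠ 0 := mul_ne_zero huv.denom_ne_zero hvw.denom_ne_zero
  have ev_ne_zero : e * v ≠ 0 := mul_ne_zero huv.center_ne_zero huv.right_ne_zero
  unfold TetrahedronEq
  constructor <;> intro h
  · apply mul_left_cancel₀ ev_ne_zero
    linear_combination -d * h + v * num_eq - z * den_eq
  · apply mul_right_cancel₀ d_ne_zero
    linear_combination -(e * v) * h + v * num_eq - z * den_eq

theorem consistent_around_cube (huv : IsMKdVQuad p q e u v uv) (huw : IsMKdVQuad p r e u w uw)
    (hvw : IsMKdVQuad q r e v w vw) (hz : IsMKdVQuad q r u uv uw z) :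
    IsMKdVQuad p r v uv vw z ∧ IsMKdVQuad p q w uw vw z := by
  have tetra : TetrahedronEq p q r u v w z :=
    ((face_eq_iff_tetrahedronEq huv.swap huw).mp hz.eq).swap
  refine ⟨⟨huw.sq_ne_sq, huv.right_ne_zero, huv.opposite_ne_zero, hvw.opposite_ne_zero,
    hz.opposite_ne_zero, (face_eq_iff_tetrahedronEq huv hvw).mpr tetra⟩,
    ⟨huv.sq_ne_sq, huw.right_ne_zero, huw.opposite_ne_zero, hvw.opposite_ne_zero,
    hz.opposite_ne_zero, ?_⟩⟩
  exact (face_eq_iff_tetrahedronEq huw hvw.swap).mpr tetra.swap.rotate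

end IsMKdVQuad

end MKdV

section FaceCentered

variable {x xa xb xc xd a1 a2 b1 b2 n n1 n2 m1 m2 : ℂ}

theorem C3_zero_eq_zero_of_quads (hxa : IsMKdVQuad a2 b1 x n xc xa)
    (hxb : IsMKdVQuad a2 b2 x n xd xb) : C3 0 0 0 x xa xb xc xd a1 a2 b1 b2 = 0 := by
  apply mul_right_cancel₀ hxa.left_ne_zero
  unfold C3
  linear_combination (a2 * x - b2 * xb) * xd * hxa.eq - (a2 * x - b1 * xa) * xc * hxb.eq

theorem A3_zero_mul_eq (ha1 : a1 ≠ 0) (ha2 : a2 ≠ 0) (hb1 : b1 ≠ 0) (hb2 : b2 ≠ 0) :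
    A3 0 x xa xb xc xd a1 a2 b1 b2 * (-x * (a1 * a2 * b1 * b2)) =
      (b1 * x - a2 * xa) * (a2 * x - b2 * xb) * (a1 * x - b1 * xc) * (b2 * x - a1 * xd)
      - (a2 * x - b1 * xa) * (b2 * x - a2 * xb) * (b1 * x - a1 * xc) * (a1 * x - b2 * xd) := by
  unfold A3
  field_simp
  ring

theorem A3_zero_eq_zero_of_quads (ha1 : a1 ≠ 0) (ha2 : a2 ≠ 0) (hb1 : b1 ≠ 0) (hb2 : b2 ≠ 0)
    (hxa : IsMKdVQuad a2 b1 x n2 m1 xa) (hxb : IsMKdVQuad a2 b2 x n2 m2 xb)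
    (hxc : IsMKdVQuad a1 b1 x n1 m1 xc) (hxd : IsMKdVQuad a1 b2 x n1 m2 xd) :
    A3 0 x xa xb xc xd a1 a2 b1 b2 = 0 := by
  have legs_mul_eq :
      (b1 * x - a2 * xa) * (a2 * x - b2 * xb) * (a1 * x - b1 * xc) * (b2 * x - a1 * xd)
      = (a2 * x - b1 * xa) * (b2 * x - a2 * xb) * (b1 * x - a1 * xc) * (a1 * x - b2 * xd) := by
    have neighbours_ne_zero : n2 * m2 * m1 * n1 ≠ 0 := by
      simp only [ne_eq, mul_eq_zero, not_or]
      exact ⟨⟨⟨hxa.left_ne_zero, hxb.right_ne_zero⟩, hxa.right_ne_zero⟩, hxc.left_ne_zero⟩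
    apply mul_right_cancel₀ neighbours_ne_zero
    calc _ = (n2 * (b1 * x - a2 * xa)) * (m2 * (a2 * x - b2 * xb))
          * (m1 * (a1 * x - b1 * xc)) * (n1 * (b2 * x - a1 * xd)) := by ring
      _ = _ := by rw [hxa.reflect.eq, ← hxb.reflect.eq, ← hxc.reflect.eq, hxd.reflect.eq]; ring
  have factor_ne_zero : -x * (a1 * a2 * b1 * b2) ≠ 0 := by
    simp [ha1, ha2, hb1, hb2, hxa.center_ne_zero]
  apply mul_right_cancel₀ factor_ne_zero
  rw [A3_zero_mul_eq ha1 ha2 hb1 hb2, legs_mul_eq, sub_self, zero_mul]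

end FaceCentered

section FourCube

/-- A solution of the lattice modified KdV equation on the twelve squares of a four-dimensional cube
which enter the equations of the face-centered cube with fixed second parameter `b`. A field is
named after the directions and the corner of its square, the directions `a, g, h, b` standing for
`α2, γ1, γ2` and one of `β1, β2`. The vertices `n, x, zn, zs, m, y` do not depend on the choice of
`b`. For `b = β1` the vertices `xa, xc, ya, yc, zw` have their meaning in the system, while for
`b = β2` they stand for `xb, xd, yb, yd, ze`. The vertices `n, m, k, l, j` are auxiliary. -/
structure IsFourCubeSolution {K : Type*} [Field K]
    (a g h b n x zn zs m y xa xc ya yc zw k l j : K) : Prop where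
  ag_n : IsMKdVQuad a g n x zn zs
  ah_zn : IsMKdVQuad a h zn zs m y
  ab_n : IsMKdVQuad a b n x xa xc
  bg_n : IsMKdVQuad b g n xa zn k
  ah_xa : IsMKdVQuad a h xa xc l zw
  gh_xa : IsMKdVQuad g h xa k l ya
  bh_k : IsMKdVQuad b h k zn ya m
  gh_xc : IsMKdVQuad g h xc j zw yc
  bg_xc : IsMKdVQuad b g xc x j zs
  ag_l : IsMKdVQuad a g l zw ya yc
  ab_ya : IsMKdVQuad a b ya yc m y
  bh_j : IsMKdVQuad b h j zs yc y

theorem IsMKdVQuad.isFourCubeSolution {K : Type*} [Field K]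
    {a g h b n x zn zs m y xa xc ya yc zw k l j : K}
    (ag_n : IsMKdVQuad a g n x zn zs) (ah_zn : IsMKdVQuad a h zn zs m y)
    (ab_n : IsMKdVQuad a b n x xa xc) (bg_n : IsMKdVQuad b g n xa zn k)
    (ah_xa : IsMKdVQuad a h xa xc l zw) (gh_xa : IsMKdVQuad g h xa k l ya)
    (bh_k : IsMKdVQuad b h k zn ya m) (ag_xa : IsMKdVQuad a g xa xc k j)
    (gh_xc : IsMKdVQuad g h xc j zw yc) :
    IsFourCubeSolution a g h b n x zn zs m y xa xc ya yc zw k l j := by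
  obtain ⟨bg_x, ab_zn⟩ := consistent_around_cube ab_n.swap bg_n ag_n ag_xa
  obtain ⟨ah_k, ag_l⟩ := consistent_around_cube ag_xa ah_xa gh_xa gh_xc
  obtain ⟨bh_j, ab_ya⟩ := consistent_around_cube ab_zn.rotate.swap bh_k ah_k ah_zn
  exact ⟨ag_n, ah_zn, ab_n, bg_n, ah_xa, gh_xa, bh_k, gh_xc, bg_x.reflect, ag_l, ab_ya.swap,
    bh_j⟩

/-- The CAFCC system of fourteen equations for a pair `(A, C)` of face-centered quad
polynomials. -/
def IsCAFCC (A C : ℂ → ℂ → ℂ → ℂ → ℂ → ℂ → ℂ → ℂ → ℂ → ℂ)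
    (a1 a2 b1 b2 g1 g2 x xa xb xc xd y ya yb yc yd zn ze zs zw : ℂ) : Prop :=
  C x xa xb xc xd a1 a2 b1 b2 = 0 ∧
  C zw ya xa yc xc a1 a2 g1 g2 = 0 ∧
  A zn ya yb xa xb g1 g2 b1 b2 = 0 ∧
  C y ya yb yc yd a1 a2 b1 b2 = 0 ∧
  C ze yb xb yd xd a1 a2 g1 g2 = 0 ∧
  A zs yc yd xc xd g1 g2 b1 b2 = 0 ∧
  A xa zw ya x zn b1 g2 a2 g1 = 0 ∧
  A xb ze yb x zn b2 g2 a2 g1 = 0 ∧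
  C xc zs yc x zw a1 g1 b1 g2 = 0 ∧
  C xd yd zs ze x a1 g1 g2 b2 = 0 ∧
  A ya zw xa y zn b1 g1 a2 g2 = 0 ∧
  A yb ze xb y zn b2 g1 a2 g2 = 0 ∧
  C yc xc zs zw y a1 g2 g1 b1 = 0 ∧
  C yd xd zs ze y a1 g2 g1 b2 = 0

theorem IsFourCubeSolution.isCAFCC
    {a1 a2 b1 b2 g1 g2 n x zn zs m y xa xc ya yc zw k l j xb xd yb yd ze k' l' j' : ℂ}
    (ha2 : a2 ≠ 0) (hb1 : b1 ≠ 0) (hb2 : b2 ≠ 0) (hg1 : g1 ≠ 0) (hg2 : g2 ≠ 0)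
    (s : IsFourCubeSolution a2 g1 g2 b1 n x zn zs m y xa xc ya yc zw k l j)
    (t : IsFourCubeSolution a2 g1 g2 b2 n x zn zs m y xb xd yb yd ze k' l' j') :
    IsCAFCC (A3 0) (C3 0 0 0) a1 a2 b1 b2 g1 g2 x xa xb xc xd y ya yb yc yd zn ze zs zw :=
  ⟨C3_zero_eq_zero_of_quads s.ab_n.reflect t.ab_n.reflect,
    C3_zero_eq_zero_of_quads s.ag_l.reflect s.ah_xa.opposite,
    A3_zero_eq_zero_of_quads hg1 hg2 hb1 hb2 s.bh_k.rotate t.bh_k.rotate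
      s.bg_n.swap.reflect t.bg_n.swap.reflect,
    C3_zero_eq_zero_of_quads s.ab_ya.opposite t.ab_ya.opposite,
    C3_zero_eq_zero_of_quads t.ag_l.reflect t.ah_xa.opposite,
    A3_zero_eq_zero_of_quads hg1 hg2 hb1 hb2 s.bh_j.rotate t.bh_j.rotate
      s.bg_xc.opposite.swap t.bg_xc.opposite.swap,
    A3_zero_eq_zero_of_quads hb1 hg2 ha2 hg1 s.ah_xa.swap s.gh_xa.swap
      s.ab_n.swap.reflect s.bg_n.reflect,
    A3_zero_eq_zero_of_quads hb2 hg2 ha2 hg1 t.ah_xa.swap t.gh_xa.swap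
      t.ab_n.swap.reflect t.bg_n.reflect,
    C3_zero_eq_zero_of_quads s.bg_xc.swap s.gh_xc,
    C3_zero_eq_zero_of_quads t.gh_xc t.bg_xc.swap,
    A3_zero_eq_zero_of_quads hb1 hg1 ha2 hg2 s.ag_l.swap.reflect s.gh_xa.opposite
      s.ab_ya.swap s.bh_k.swap.rotate,
    A3_zero_eq_zero_of_quads hb2 hg1 ha2 hg2 t.ag_l.swap.reflect t.gh_xa.opposite
      t.ab_ya.swap t.bh_k.swap.rotate,
    C3_zero_eq_zero_of_quads s.gh_xc.opposite.swap s.bh_j.swap.reflect,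
    C3_zero_eq_zero_of_quads t.gh_xc.opposite.swap t.bh_j.swap.reflect⟩

end FourCube

section Generic

variable {σ K : Type*} [Field K] {t₀ : σ → K}

/-- The filter of Zariski neighbourhoods of a point of affine space. -/
def zariskiNhds (t₀ : σ → K) : Filter (σ → K) :=
  comap (pointToPoint (k := K)) (nhds (pointToPoint t₀))

theorem mem_zariskiNhds {S : Set (σ → K)} :
    S ∈ zariskiNhds t₀ ↔
      ∃ p : MvPolynomial σ K, eval t₀ p ≠ 0 ∧ ∀ t, eval t p ≠ 0 → t ∈ S := by
  have mem_asIdeal (t : σ → K) (p : MvPolynomial σ K) :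
      p ∈ (pointToPoint t).asIdeal ↔ eval t p = 0 := by
    simp [pointToPoint]
  simp [zariskiNhds, (PrimeSpectrum.isTopologicalBasis_basic_opens.nhds_hasBasis.comap _).mem_iff,
    mem_asIdeal, Set.subset_def]

theorem eventually_eval_ne_zero {p : MvPolynomial σ K} (hp : eval t₀ p ≠ 0) :
    ∀ᶠ t in zariskiNhds t₀, eval t p ≠ 0 :=
  mem_zariskiNhds.mpr ⟨p, hp, fun _ => id⟩

/-- A function on affine space is regular at `t₀` if it agrees with a quotient of polynomials
whose denominator does not vanish at `t₀` on a Zariski neighbourhood of `t₀`. -/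
def IsRegularAt (f : (σ → K) → K) (t₀ : σ → K) : Prop :=
  ∃ n d : MvPolynomial σ K, eval t₀ d ≠ 0 ∧
    f =ᶠ[zariskiNhds t₀] fun t => eval t n / eval t d

theorem eq_of_eventuallyEq_zariskiNhds {f g : (σ → K) → K} (h : f =ᶠ[zariskiNhds t₀] g) :
    f t₀ = g t₀ := by
  obtain ⟨p, hp, hS⟩ := mem_zariskiNhds.mp h
  exact hS t₀ hp

namespace IsRegularAt

variable {f g : (σ → K) → K}

theorem coord (i : σ) : IsRegularAt (fun t : σ → K => t i) t₀ :=
  ⟨X i, 1, by simp, .of_eq (by simp)⟩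

theorem mul (hf : IsRegularAt f t₀) (hg : IsRegularAt g t₀) :
    IsRegularAt (fun t => f t * g t) t₀ := by
  obtain ⟨n, d, hd, hf⟩ := hf
  obtain ⟨m, e, he, hg⟩ := hg
  refine ⟨n * m, d * e, by simp [hd, he], ?_⟩
  filter_upwards [hf, hg] with t hft hgt
  rw [hft, hgt, map_mul, map_mul, div_mul_div_comm]

theorem sub (hf : IsRegularAt f t₀) (hg : IsRegularAt g t₀) :
    IsRegularAt (fun t => f t - g t) t₀ := by
  obtain ⟨n, d, hd, hf⟩ := hf
  obtain ⟨m, e, he, hg⟩ := hg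
  refine ⟨n * e - d * m, d * e, by simp [hd, he], ?_⟩
  filter_upwards [hf, hg, eventually_eval_ne_zero hd, eventually_eval_ne_zero he]
    with t hft hgt hdt het
  rw [hft, hgt, div_sub_div _ _ hdt het]
  simp only [map_sub, map_mul]

theorem div (hf : IsRegularAt f t₀) (hg : IsRegularAt g t₀) (hg₀ : g t₀ ≠ 0) :
    IsRegularAt (fun t => f t / g t) t₀ := by
  obtain ⟨n, d, hd, hf⟩ := hf
  obtain ⟨m, e, he, hg⟩ := hg
  have hm : eval t₀ m ≠ 0 := by
    rw [eq_of_eventuallyEq_zariskiNhds hg] at hg₀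
    exact (div_ne_zero_iff.mp hg₀).1
  refine ⟨n * e, d * m, by simp [hd, hm], ?_⟩
  filter_upwards [hf, hg] with t hft hgt
  rw [hft, hgt, map_mul, map_mul, div_div_div_eq]

theorem eventually_ne_zero (hf : IsRegularAt f t₀) (hf₀ : f t₀ ≠ 0) :
    ∀ᶠ t in zariskiNhds t₀, f t ≠ 0 := by
  obtain ⟨n, d, hd, hf⟩ := hf
  rw [eq_of_eventuallyEq_zariskiNhds hf] at hf₀
  filter_upwards [hf, eventually_eval_ne_zero hd,
    eventually_eval_ne_zero (div_ne_zero_iff.mp hf₀).1] with t hft hdt hnt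
  rw [hft]
  exact div_ne_zero hnt hdt

end IsRegularAt

/-- A function which is regular at `t₀` and takes one of the values `1` and `-1` there. -/
structure IsSignAt (f : (σ → K) → K) (t₀ : σ → K) : Prop where
  regular : IsRegularAt f t₀
  sq_eq_one : f t₀ ^ 2 = 1

/-- Two regular functions which may serve as the parameters of a nondegenerate quad near `t₀`. -/
structure IsParameterPairAt (p q : (σ → K) → K) (t₀ : σ → K) : Prop where
  regular_left : IsRegularAt p t₀
  regular_right : IsRegularAt q t₀
  sq_ne_sq : p t₀ ^ 2 ≠ q t₀ ^ 2

theorem IsSignAt.ne_zero {f : (σ → K) → K} (hf : IsSignAt f t₀) : f t₀ ≠ 0 := by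
  intro h
  simpa [h] using hf.sq_eq_one

theorem IsSignAt.eventually_ne_zero {f : (σ → K) → K} (hf : IsSignAt f t₀) :
    ∀ᶠ t in zariskiNhds t₀, f t ≠ 0 :=
  hf.regular.eventually_ne_zero hf.ne_zero

theorem IsParameterPairAt.eventually_sq_ne_sq {p q : (σ → K) → K}
    (h : IsParameterPairAt p q t₀) : ∀ᶠ t in zariskiNhds t₀, p t ^ 2 ≠ q t ^ 2 := by
  have sub_regular := (h.regular_left.mul h.regular_left).sub (h.regular_right.mul h.regular_right)
  filter_upwards [sub_regular.eventually_ne_zero (by simpa [← sq, sub_eq_zero] using h.sq_ne_sq)]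
    with t ht
  simpa [← sq, sub_eq_zero] using ht

theorem mul_sub_mul_ne_zero_of_sq_eq_one {p q u v : K} (hpq : p ^ 2 ≠ q ^ 2) (hu : u ^ 2 = 1)
    (hv : v ^ 2 = 1) : p * u - q * v ≠ 0 := by
  intro h
  apply hpq
  linear_combination (p * u + q * v) * h - p ^ 2 * hu + q ^ 2 * hv

theorem quad_solution_of_sq_eq_one {p q e u v : K} (hpq : p ^ 2 ≠ q ^ 2) (hu : u ^ 2 = 1)
    (hv : v ^ 2 = 1) : e * (q * u - p * v) / (p * u - q * v) = -(e * u * v) := by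
  rw [div_eq_iff (mul_sub_mul_ne_zero_of_sq_eq_one hpq hu hv)]
  linear_combination p * e * v * hu - q * e * u * hv

theorem IsSignAt.exists_eventually_quad {p q e u v : (σ → K) → K}
    (he : IsSignAt e t₀) (hu : IsSignAt u t₀) (hv : IsSignAt v t₀)
    (hpq : IsParameterPairAt p q t₀) :
    ∃ w, IsSignAt w t₀ ∧
      ∀ᶠ t in zariskiNhds t₀, IsMKdVQuad (p t) (q t) (e t) (u t) (v t) (w t) := by
  have num_regular : IsRegularAt (fun t => e t * (q t * u t - p t * v t)) t₀ :=
    he.regular.mul ((hpq.regular_right.mul hu.regular).sub (hpq.regular_left.mul hv.regular))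
  have den_regular : IsRegularAt (fun t => p t * u t - q t * v t) t₀ :=
    (hpq.regular_left.mul hu.regular).sub (hpq.regular_right.mul hv.regular)
  have den_ne_zero := mul_sub_mul_ne_zero_of_sq_eq_one hpq.sq_ne_sq hu.sq_eq_one hv.sq_eq_one
  let w := fun t => e t * (q t * u t - p t * v t) / (p t * u t - q t * v t)
  have hw : IsSignAt w t₀ := by
    refine ⟨num_regular.div den_regular den_ne_zero, ?_⟩
    simp only [w, quad_solution_of_sq_eq_one hpq.sq_ne_sq hu.sq_eq_one hv.sq_eq_one, neg_sq,
      mul_pow, he.sq_eq_one, hu.sq_eq_one, hv.sq_eq_one, one_mul]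
  refine ⟨w, hw, ?_⟩
  filter_upwards [hpq.eventually_sq_ne_sq, he.eventually_ne_zero, hu.eventually_ne_zero,
    hv.eventually_ne_zero, hw.eventually_ne_zero, den_regular.eventually_ne_zero den_ne_zero]
    with t hpqt het hut hvt hwt hdent
  exact ⟨hpqt, het, hut, hvt, hwt, (div_mul_cancel₀ _ hdent).symm⟩

variable {a b b' g h n m x y xa xb xc ya yc zn zs zw k l j : (σ → K) → K}

theorem exists_eventually_isFourCubeSolution
    (hab : IsParameterPairAt a b t₀) (hag : IsParameterPairAt a g t₀)
    (hah : IsParameterPairAt a h t₀) (hbg : IsParameterPairAt b g t₀)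
    (hbh : IsParameterPairAt b h t₀) (hgh : IsParameterPairAt g h t₀)
    (hx : IsSignAt x t₀) (hxa : IsSignAt xa t₀) (hxc : IsSignAt xc t₀)
    (hzn : IsSignAt zn t₀) (hzw : IsSignAt zw t₀) :
    ∃ n zs m y ya yc k l j : (σ → K) → K, IsSignAt n t₀ ∧ IsSignAt m t₀ ∧
      ∀ᶠ t in zariskiNhds t₀, IsFourCubeSolution (a t) (g t) (h t) (b t) (n t) (x t) (zn t) (zs t)
        (m t) (y t) (xa t) (xc t) (ya t) (yc t) (zw t) (k t) (l t) (j t) := by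
  obtain ⟨n, hn, ab_xc⟩ := hxc.exists_eventually_quad hxa hx hab
  obtain ⟨k, hk, bg_n⟩ := hn.exists_eventually_quad hxa hzn hbg
  obtain ⟨l, hl, ah_xc⟩ := hxc.exists_eventually_quad hxa hzw hah
  obtain ⟨ya, hya, gh_xa⟩ := hxa.exists_eventually_quad hk hl hgh
  obtain ⟨m, hm, bh_k⟩ := hk.exists_eventually_quad hzn hya hbh
  obtain ⟨j, hj, ag_xa⟩ := hxa.exists_eventually_quad hxc hk hag
  obtain ⟨yc, -, gh_xc⟩ := hxc.exists_eventually_quad hj hzw hgh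
  obtain ⟨zs, hzs, ag_n⟩ := hn.exists_eventually_quad hx hzn hag
  obtain ⟨y, -, ah_zn⟩ := hzn.exists_eventually_quad hzs hm hah
  refine ⟨n, zs, m, y, ya, yc, k, l, j, hn, hm, ?_⟩
  filter_upwards [ab_xc, bg_n, ah_xc, gh_xa, bh_k, ag_xa, gh_xc, ag_n, ah_zn]
    with t ab_xc bg_n ah_xc gh_xa bh_k ag_xa gh_xc ag_n ah_zn
  exact IsMKdVQuad.isFourCubeSolution ag_n ah_zn ab_xc.opposite bg_n ah_xc.reflect gh_xa bh_k
    ag_xa gh_xc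

theorem exists_eventually_isFourCubeSolution_of_shared
    (hab : IsParameterPairAt a b' t₀) (hag : IsParameterPairAt a g t₀)
    (hah : IsParameterPairAt a h t₀) (hbg : IsParameterPairAt b' g t₀)
    (hbh : IsParameterPairAt b' h t₀) (hgh : IsParameterPairAt g h t₀)
    (hn : IsSignAt n t₀) (hm : IsSignAt m t₀) (hx : IsSignAt x t₀) (hxb : IsSignAt xb t₀)
    (hzn : IsSignAt zn t₀)
    (shared : ∀ᶠ t in zariskiNhds t₀, IsFourCubeSolution (a t) (g t) (h t) (b t) (n t) (x t) (zn t)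
      (zs t) (m t) (y t) (xa t) (xc t) (ya t) (yc t) (zw t) (k t) (l t) (j t)) :
    ∃ xd yb yd ze k' l' j' : (σ → K) → K,
      ∀ᶠ t in zariskiNhds t₀, IsFourCubeSolution (a t) (g t) (h t) (b' t) (n t) (x t) (zn t) (zs t)
        (m t) (y t) (xb t) (xd t) (yb t) (yd t) (ze t) (k' t) (l' t) (j' t) := by
  obtain ⟨xd, hxd, ab_n⟩ := hn.exists_eventually_quad hx hxb hab
  obtain ⟨k', hk, bg_n⟩ := hn.exists_eventually_quad hxb hzn hbg
  obtain ⟨yb, hyb, bh_zn⟩ := hzn.exists_eventually_quad hk hm hbh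
  obtain ⟨l', hl, gh_k⟩ := hk.exists_eventually_quad hxb hyb hgh
  obtain ⟨ze, hze, ah_xb⟩ := hxb.exists_eventually_quad hxd hl hah
  obtain ⟨j', hj, ag_xb⟩ := hxb.exists_eventually_quad hxd hk hag
  obtain ⟨yd, -, gh_xd⟩ := hxd.exists_eventually_quad hj hze hgh
  refine ⟨xd, yb, yd, ze, k', l', j', ?_⟩
  filter_upwards [shared, ab_n, bg_n, bh_zn, gh_k, ah_xb, ag_xb, gh_xd]
    with t shared ab_n bg_n bh_zn gh_k ah_xb ag_xb gh_xd
  exact IsMKdVQuad.isFourCubeSolution shared.ag_n shared.ah_zn ab_n bg_n ah_xb gh_k.reflect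
    bh_zn.reflect ag_xb gh_xd

end Generic

/-- The point at which genericity is checked: distinct positive values of the parameters
`a1, a2, b1, b2, g1, g2`, and signs as values of the initial data `x, xa, xb, xc, zn, zw`. The
entries are natural numbers so that conditions on them are decidable. -/
def basePoint : Fin 12 → ℕ := ![1, 2, 3, 4, 5, 6, 1, 1, 1, 1, 1, 1]

theorem eventually_exists_isFourCubeSolution :
    ∀ᶠ t in zariskiNhds fun i => (basePoint i : ℂ),
      ∃ n m xd y ya yb yc yd ze zs k l j k' l' j',
        IsFourCubeSolution (t 1) (t 4) (t 5) (t 2) n (t 6) (t 10) zs m y (t 7) (t 9) ya yc (t 11)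
          k l j ∧
        IsFourCubeSolution (t 1) (t 4) (t 5) (t 3) n (t 6) (t 10) zs m y (t 8) xd yb yd ze
          k' l' j' := by
  have pair (i i' : Fin 12) (hne : basePoint i ^ 2 ≠ basePoint i' ^ 2 := by decide) :
      IsParameterPairAt (fun t => t i) (fun t => t i') fun i => (basePoint i : ℂ) :=
    ⟨.coord i, .coord i', by dsimp only; exact_mod_cast hne⟩
  have sign (i : Fin 12) (hi : basePoint i ^ 2 = 1 := by decide) :
      IsSignAt (fun t => t i) fun i => (basePoint i : ℂ) :=
    ⟨.coord i, by dsimp only; exact_mod_cast hi⟩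
  obtain ⟨n, zs, m, y, ya, yc, k, l, j, hn, hm, first⟩ :=
    exists_eventually_isFourCubeSolution (pair 1 2) (pair 1 4) (pair 1 5) (pair 2 4) (pair 2 5)
      (pair 4 5) (sign 6) (sign 7) (sign 9) (sign 10) (sign 11)
  obtain ⟨xd, yb, yd, ze, k', l', j', second⟩ :=
    exists_eventually_isFourCubeSolution_of_shared (pair 1 3) (pair 1 4) (pair 1 5) (pair 3 4)
      (pair 3 5) (pair 4 5) hn hm (sign 6) (sign 8) (sign 10) first
  filter_upwards [first, second] with t first second
  exact ⟨n t, m t, xd t, y t, ya t, yb t, yc t, yd t, ze t, zs t, k t, l t, j t, k' t, l' t, j' t,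
    first, second⟩

theorem statement10 :
    ∃ p : MvPolynomial (Fin 12) ℂ, p ≠ 0 ∧
    ∀ a1 a2 b1 b2 g1 g2 x xa xb xc zn zw : ℂ,
      a1 ≠ 0 → a2 ≠ 0 → b1 ≠ 0 → b2 ≠ 0 → g1 ≠ 0 → g2 ≠ 0 →
      MvPolynomial.eval (![a1, a2, b1, b2, g1, g2, x, xa, xb, xc, zn, zw]) p ≠ 0 →
      ∃ xd y ya yb yc yd ze zs : ℂ,
        C3 0 0 0 x xa xb xc xd a1 a2 b1 b2 = 0 ∧
        C3 0 0 0 zw ya xa yc xc a1 a2 g1 g2 = 0 ∧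
        A3 0 zn ya yb xa xb g1 g2 b1 b2 = 0 ∧
        C3 0 0 0 y ya yb yc yd a1 a2 b1 b2 = 0 ∧
        C3 0 0 0 ze yb xb yd xd a1 a2 g1 g2 = 0 ∧
        A3 0 zs yc yd xc xd g1 g2 b1 b2 = 0 ∧
        A3 0 xa zw ya x zn b1 g2 a2 g1 = 0 ∧
        A3 0 xb ze yb x zn b2 g2 a2 g1 = 0 ∧
        C3 0 0 0 xc zs yc x zw a1 g1 b1 g2 = 0 ∧
        C3 0 0 0 xd yd zs ze x a1 g1 g2 b2 = 0 ∧
        A3 0 ya zw xa y zn b1 g1 a2 g2 = 0 ∧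
        A3 0 yb ze xb y zn b2 g1 a2 g2 = 0 ∧
        C3 0 0 0 yc xc zs zw y a1 g2 g1 b1 = 0 ∧
        C3 0 0 0 yd xd zs ze y a1 g2 g1 b2 = 0 := by
  obtain ⟨p, hp, solution⟩ := mem_zariskiNhds.mp eventually_exists_isFourCubeSolution
  refine ⟨p, fun h => hp (by rw [h, map_zero]), ?_⟩
  intro a1 a2 b1 b2 g1 g2 x xa xb xc zn zw _ ha2 hb1 hb2 hg1 hg2 hpt
  obtain ⟨n, m, xd, y, ya, yb, yc, yd, ze, zs, k, l, j, k', l', j', first, second⟩ :=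
    solution _ hpt
  exact ⟨xd, y, ya, yb, yc, yd, ze, zs, first.isCAFCC ha2 hb1 hb2 hg1 hg2 second⟩
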